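/- A ring R is a uniquely clean ring if and only if R is a √J-clean ring in which every idempotent is central. -/

import Mathlib

/-- `√J(R)`: the set of elements some positive power of which lies in the
Jacobson radical `J(R)` of the ring `R`. -/
def sqrtJ (R : Type*) [Ring R] : Set R :=
  {z : R | ∃ n : ℕ, 1 ≤ n ∧ z ^ n ∈ (⊥ : TwoSidedIdeal R).jacobson}

/-- `R` is a `√J`-clean ring: every element is the sum of an idempotent and an
element of `√J(R)`. -/
def IsSqrtJCleanRing (R : Type*) [Ring R] : Prop :=
  ∀ a : R, ∃ e z : R, IsIdempotentElem e ∧ z ∈ sqrtJ R ∧ a = e + z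

/-- `R` is a strongly `√J`-clean ring: every element is the sum of an idempotent
and an element of `√J(R)` that commute with each other. -/
def IsStronglySqrtJCleanRing (R : Type*) [Ring R] : Prop :=
  ∀ a : R, ∃ e z : R, IsIdempotentElem e ∧ z ∈ sqrtJ R ∧ a = e + z ∧ e * z = z * e

/-- `R` is a uniquely `√J`-clean ring: every element is uniquely the sum of an
idempotent and an element of `√J(R)`. -/
def IsUniquelySqrtJCleanRing (R : Type*) [Ring R] : Prop :=
  ∀ a : R, ∃! p : R × R, IsIdempotentElem p.1 ∧ p.2 ∈ sqrtJ R ∧ a = p.1 + p.2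

/-- `R` is a uniquely clean ring: every element is uniquely the sum of an
idempotent and a unit. -/
def IsUniquelyCleanRing (R : Type*) [Ring R] : Prop :=
  ∀ a : R, ∃! p : R × R, IsIdempotentElem p.1 ∧ IsUnit p.2 ∧ a = p.1 + p.2

/-!
In a uniquely clean ring, `e + (1 + n) = (e + n) + 1` with `n = e * r * (1 - e)` forces `n = 0`, so
idempotents are central. If `u` is a unit and `y * (u - 1) + 1 = g + v` is a clean decomposition,
then `g * (u - 1)` is left invertible in the corner ring `g * R`, which makes `u - g` a unit;
comparing `0 + u` with `g + (u - g)` yields `g = 0`. Hence `u - 1 ∈ J(R)`, and a clean decomposition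
`a + 1 = e + u` becomes `a = e + (u - 1)`.

Conversely, let `R` be `√J`-clean with central idempotents. Subtracting from a unit an element of
`√J(R)` commuting with it leaves a unit. Hence a `√J`-clean decomposition `a - 1 = e + z` gives a
clean decomposition `a = e + (1 + z)`, and every unit lies in `1 + √J(R)`. If `e + u = f + v` with
units `u` and `v`, then `g = e * (1 - f)` satisfies `g * u = g * (v - 1) ∈ √J(R)`, so
`u - g * u = (1 - g) * u` is a unit and `g = 0`; by symmetry `e = f`.
-/

/-- Every idempotent is central. A ring with this property is called *abelian* in the literature on
clean rings. -/
def HasCentralIdempotents (M : Type*) [Mul M] : Prop :=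
  ∀ e : M, IsIdempotentElem e → ∀ x : M, Commute e x

theorem HasCentralIdempotents.isDedekindFiniteMonoid {M : Type*} [Monoid M]
    (hM : HasCentralIdempotents M) : IsDedekindFiniteMonoid M where
  mul_eq_one_symm {a b} hab := by
    have hba : IsIdempotentElem (b * a) := by
      rw [IsIdempotentElem, mul_assoc, ← mul_assoc a, hab, one_mul]
    calc b * a = (b * a) * (a * b) := by rw [hab, mul_one]
      _ = a * (b * a) * b := by rw [← mul_assoc, (hM _ hba a).eq]
      _ = (a * b) * (a * b) := by simp only [mul_assoc]
      _ = 1 := by rw [hab, mul_one]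

section Ring

variable {R : Type*} [Ring R]

theorem HasCentralIdempotents.isUnit_sub_of_mul_mul_sub_one_eq (hc : HasCentralIdempotents R)
    {g s u : R} (hg : IsIdempotentElem g) (hu : IsUnit u) (h : g * (s * (u - 1)) = g) :
    IsUnit (u - g) := by
  have := hc.isDedekindFiniteMonoid
  obtain ⟨u, rfl⟩ := hu
  have hgs : g * s * (u - g) = g := by
    have hgc : g * s * g = g * s := by rw [mul_assoc, ← (hc g hg s).eq, hg.mul_self_mul]
    rw [← mul_assoc, mul_sub, mul_one] at h
    rw [mul_sub, hgc, h]
  have hgu : (1 - g) * ↑u⁻¹ * (u - g) = 1 - g := by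
    rw [mul_sub, Units.inv_mul_cancel_right, mul_assoc, ← (hc g hg _).eq, ← mul_assoc,
      hg.one_sub_mul_self, zero_mul, sub_zero]
  refine IsUnit.of_mul_eq_one_right (g * s + (1 - g) * ↑u⁻¹) ?_
  rw [add_mul, hgs, hgu, add_sub_cancel]

theorem mem_jacobson_bot_iff_isUnit {x : R} :
    x ∈ (⊥ : TwoSidedIdeal R).jacobson ↔ ∀ y, IsUnit (y * x + 1) := by
  have mem_iff : x ∈ (⊥ : TwoSidedIdeal R).jacobson ↔ ∀ y, ∃ z, z * (y * x + 1) = 1 := by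
    simp only [TwoSidedIdeal.mem_jacobson_iff, TwoSidedIdeal.mem_bot, sub_eq_zero, mul_add,
      mul_one, mul_assoc]
  rw [mem_iff]
  refine ⟨fun hx y => ?_, fun hx y => (hx y).exists_left_inv⟩
  obtain ⟨z, hz⟩ := hx y
  -- The left inverse `z` is again of the form `y' * x + 1`, so it has a left inverse itself.
  have hz_eq : -(z * y) * x + 1 = z := by
    rw [← hz]
    noncomm_ring
  obtain ⟨t, ht⟩ := hx (-(z * y))
  rw [hz_eq] at ht
  have ht_eq : t = y * x + 1 := left_inv_eq_right_inv ht hz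
  exact ⟨⟨y * x + 1, z, ht_eq ▸ ht, hz⟩, rfl⟩

theorem isUnit_one_sub_of_isUnit_one_sub_pow {z : R} {n : ℕ} (h : IsUnit (1 - z ^ n)) :
    IsUnit (1 - z) := by
  have hcomm : Commute (1 - z) (∑ i ∈ Finset.range n, z ^ i) :=
    (mul_neg_geom_sum z n).trans (geom_sum_mul_neg z n).symm
  rw [← mul_neg_geom_sum] at h
  exact (hcomm.isUnit_mul_iff.1 h).1

section SqrtJ

variable {u w z : R}

theorem isUnit_one_sub_of_mem_sqrtJ (hz : z ∈ sqrtJ R) : IsUnit (1 - z) := by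
  obtain ⟨n, -, hzn⟩ := hz
  refine isUnit_one_sub_of_isUnit_one_sub_pow (n := n) ?_
  simpa [sub_eq_neg_add] using mem_jacobson_bot_iff_isUnit.1 hzn (-1)

theorem mul_mem_sqrtJ (hwz : Commute w z) (hz : z ∈ sqrtJ R) : w * z ∈ sqrtJ R := by
  obtain ⟨n, hn, hzn⟩ := hz
  exact ⟨n, hn, hwz.mul_pow n ▸ TwoSidedIdeal.mul_mem_left _ _ _ hzn⟩

theorem neg_mem_sqrtJ (hz : z ∈ sqrtJ R) : -z ∈ sqrtJ R := by
  simpa using mul_mem_sqrtJ (Commute.neg_one_left z) hz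

theorem isUnit_sub_of_mem_sqrtJ (hu : IsUnit u) (hz : z ∈ sqrtJ R) (huz : Commute u z) :
    IsUnit (u - z) := by
  obtain ⟨u, rfl⟩ := hu
  have h : IsUnit (1 - ↑u⁻¹ * z) :=
    isUnit_one_sub_of_mem_sqrtJ (mul_mem_sqrtJ huz.units_inv_left hz)
  simpa [mul_sub] using u.isUnit.mul h

end SqrtJ

namespace IsSqrtJCleanRing

variable {e f u v : R}

theorem sub_one_mem_sqrtJ (hR : IsSqrtJCleanRing R) (hc : HasCentralIdempotents R)
    (hu : IsUnit u) : u - 1 ∈ sqrtJ R := by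
  obtain ⟨e, z, he, hz, rfl⟩ := hR u
  have hcomm : Commute (e + z) z := (hc e he z).add_left (Commute.refl z)
  have he_unit : IsUnit e := by simpa using isUnit_sub_of_mem_sqrtJ hu hz hcomm
  obtain rfl : e = 1 := (IsIdempotentElem.iff_eq_one_of_isUnit he_unit).1 he
  simpa using hz

theorem mul_one_sub_eq_zero_of_add_eq_add (hR : IsSqrtJCleanRing R)
    (hc : HasCentralIdempotents R) (he : IsIdempotentElem e) (hf : IsIdempotentElem f)
    (hu : IsUnit u) (hv : IsUnit v) (h : e + u = f + v) : e * (1 - f) = 0 := by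
  have hg : IsIdempotentElem (e * (1 - f)) := he.mul_of_commute (hc e he _) hf.one_sub
  have hge : e * (1 - f) * e = e * (1 - f) := by rw [← (hc e he _).eq, he.mul_self_mul]
  have hgf : e * (1 - f) * f = 0 := by rw [mul_assoc, hf.one_sub_mul_self, mul_zero]
  generalize e * (1 - f) = g at hg hge hgf ⊢
  have hgu : g * (v - 1) = g * u := by
    have hmul : g + g * u = g * v := by
      rw [← zero_add (g * v), ← hgf, ← mul_add, ← h, mul_add, hge]
    rw [mul_sub, mul_one, ← hmul, add_sub_cancel_left]
  have hgu_mem : g * u ∈ sqrtJ R :=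
    hgu ▸ mul_mem_sqrtJ (hc g hg _) (hR.sub_one_mem_sqrtJ hc hv)
  have hunit : IsUnit ((1 - g) * u) := by
    have hcomm : Commute u (g * u) := (hc g hg u).symm.mul_right (Commute.refl u)
    simpa [sub_mul] using isUnit_sub_of_mem_sqrtJ hu hgu_mem hcomm
  have hg_unit : IsUnit (1 - g) := hu.mul_right_iff.1 hunit
  simpa using (IsIdempotentElem.iff_eq_one_of_isUnit hg_unit).1 hg.one_sub

theorem eq_of_add_eq_add (hR : IsSqrtJCleanRing R) (hc : HasCentralIdempotents R)
    (he : IsIdempotentElem e) (hf : IsIdempotentElem f) (hu : IsUnit u) (hv : IsUnit v)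
    (h : e + u = f + v) : e = f := by
  have hef : e = e * f := by
    simpa [mul_sub, sub_eq_zero] using hR.mul_one_sub_eq_zero_of_add_eq_add hc he hf hu hv h
  have hfe : f = f * e := by
    simpa [mul_sub, sub_eq_zero] using hR.mul_one_sub_eq_zero_of_add_eq_add hc hf he hv hu h.symm
  rw [hef, (hc e he f).eq, ← hfe]

theorem isUniquelyCleanRing (hR : IsSqrtJCleanRing R) (hc : HasCentralIdempotents R) :
    IsUniquelyCleanRing R := by
  intro a
  obtain ⟨e, z, he, hz, ha⟩ := hR (a - 1)
  have hu : IsUnit (1 + z) := by simpa using isUnit_one_sub_of_mem_sqrtJ (neg_mem_sqrtJ hz)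
  have ha' : a = e + (1 + z) := by rw [add_left_comm, ← ha, add_sub_cancel]
  refine ⟨(e, 1 + z), ⟨he, hu, ha'⟩, ?_⟩
  rintro ⟨f, v⟩ ⟨hf, hv, hav⟩
  have hadd : f + v = e + (1 + z) := hav.symm.trans ha'
  obtain rfl : f = e := hR.eq_of_add_eq_add hc hf he hv hu hadd
  exact Prod.ext rfl (add_left_cancel hadd)

end IsSqrtJCleanRing

namespace IsUniquelyCleanRing

variable {e f u v : R}

theorem eq_of_add_eq_add (hR : IsUniquelyCleanRing R) (he : IsIdempotentElem e)
    (hf : IsIdempotentElem f) (hu : IsUnit u) (hv : IsUnit v) (h : e + u = f + v) : e = f :=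
  congrArg Prod.fst <|
    (hR (e + u)).unique (y₁ := (e, u)) (y₂ := (f, v)) ⟨he, hu, rfl⟩ ⟨hf, hv, h⟩

theorem mul_mul_one_sub_eq_zero (hR : IsUniquelyCleanRing R) (he : IsIdempotentElem e) (r : R) :
    e * r * (1 - e) = 0 := by
  have hen : e * (e * r * (1 - e)) = e * r * (1 - e) := by simp only [← mul_assoc, he.eq]
  have hne : e * r * (1 - e) * e = 0 := by rw [mul_assoc, he.one_sub_mul_self, mul_zero]
  have hnn : e * r * (1 - e) * (e * r * (1 - e)) = 0 := by
    rw [← hen, ← mul_assoc, hen, hne, zero_mul]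
  generalize e * r * (1 - e) = n at hen hne hnn ⊢
  have hf : IsIdempotentElem (e + n) := by
    rw [IsIdempotentElem, add_mul, mul_add, mul_add, he.eq, hen, hne, hnn, add_zero, add_zero]
  have hu : IsUnit (1 + n) := IsNilpotent.isUnit_one_add ⟨2, by rw [sq, hnn]⟩
  have hfe : e + n = e := hR.eq_of_add_eq_add hf he isUnit_one hu (by abel)
  simpa using hfe

theorem hasCentralIdempotents (hR : IsUniquelyCleanRing R) : HasCentralIdempotents R := by
  intro e he r
  have hl : e * r = e * r * e := by
    simpa [mul_sub, sub_eq_zero] using hR.mul_mul_one_sub_eq_zero he r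
  have hr : r * e = e * r * e := by
    simpa [sub_mul, sub_eq_zero] using hR.mul_mul_one_sub_eq_zero he.one_sub r
  exact hl.trans hr.symm

theorem eq_zero_of_isUnit_sub (hR : IsUniquelyCleanRing R) (he : IsIdempotentElem e)
    (hu : IsUnit u) (hue : IsUnit (u - e)) : e = 0 :=
  hR.eq_of_add_eq_add he IsIdempotentElem.zero hue hu (by abel)

theorem sub_one_mem_jacobson (hR : IsUniquelyCleanRing R) (hu : IsUnit u) :
    u - 1 ∈ (⊥ : TwoSidedIdeal R).jacobson := by
  rw [mem_jacobson_bot_iff_isUnit]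
  intro y
  obtain ⟨⟨g, v⟩, ⟨hg, ⟨v, rfl⟩, hgv⟩, -⟩ := hR (y * (u - 1) + 1)
  have hc := hR.hasCentralIdempotents
  have hgy : g * (y * (u - 1)) = g * v := by
    rw [eq_sub_of_add_eq hgv, mul_sub, mul_add, hg.eq, mul_one, add_sub_cancel_left]
  have hgs : g * (↑v⁻¹ * y * (u - 1)) = g := by
    rw [mul_assoc, ← mul_assoc, (hc g hg _).eq, mul_assoc, hgy, (hc g hg _).eq,
      Units.inv_mul_cancel_left]
  have hg_zero : g = 0 :=
    hR.eq_zero_of_isUnit_sub hg hu (hc.isUnit_sub_of_mul_mul_sub_one_eq hg hu hgs)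
  simp [hgv, hg_zero]

theorem isSqrtJCleanRing (hR : IsUniquelyCleanRing R) : IsSqrtJCleanRing R := by
  intro a
  obtain ⟨⟨e, u⟩, ⟨he, hu, ha⟩, -⟩ := hR (a + 1)
  have hu_mem : u - 1 ∈ sqrtJ R := ⟨1, le_rfl, by simpa using hR.sub_one_mem_jacobson hu⟩
  exact ⟨e, u - 1, he, hu_mem, by rw [← add_sub_assoc, ← ha, add_sub_cancel_right]⟩

end IsUniquelyCleanRing

end Ring

theorem uniquelyClean_iff_sqrtJClean_central_idempotents (R : Type*) [Ring R] :
    IsUniquelyCleanRing R ↔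
      (IsSqrtJCleanRing R ∧ ∀ e : R, IsIdempotentElem e → ∀ x : R, e * x = x * e) :=
  ⟨fun hR => ⟨hR.isSqrtJCleanRing, hR.hasCentralIdempotents⟩,
    fun ⟨hR, hc⟩ => hR.isUniquelyCleanRing hc⟩
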